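/- Let E be a collection of pairwise hom-orthogonal bricks over Λ and let T = ⋁{Filt(Gen(M)) : M ∈ E} in tors Λ. Then the expression ⋁{Filt(Gen(M)) : M ∈ E} is the canonical join representation of T. -/

import Mathlib

/-!
Common definitions: the category `mod Λ` of finite(-dimensional) left `Λ`-modules,
torsion(-free) classes, filtration closures, bricks, minimal (co-)extending modules,
and the lattice-theoretic notions for `tors Λ` (ordered by containment).
-/

/-- A bundled (left) `Λ`-module with carrier in `Type`. -/
structure Mdl (Λ : Type) [Ring Λ] : Type 1 where
  carrier : Type
  [isAddCommGroup : AddCommGroup carrier]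
  [isModule : Module Λ carrier]

attribute [instance] Mdl.isAddCommGroup Mdl.isModule

instance {Λ : Type} [Ring Λ] : CoeSort (Mdl Λ) Type :=
  ⟨Mdl.carrier⟩

variable (Λ : Type) [Ring Λ]

/-- Bundle a module. -/
def Mdl.of (X : Type) [AddCommGroup X] [Module Λ X] : Mdl Λ :=
  { carrier := X }

/-- `M` and `N` are isomorphic `Λ`-modules. -/
def MIso (M N : Mdl Λ) : Prop :=
  Nonempty (M.carrier ≃ₗ[Λ] N.carrier)

/-- `N` is a factor (quotient) module of `M`. -/
def IsFactor (M N : Mdl Λ) : Prop :=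
  ∃ f : M.carrier →ₗ[Λ] N.carrier, Function.Surjective f

/-- `N` is a proper factor of `M` (a quotient by a nonzero submodule). -/
def IsProperFactor (M N : Mdl Λ) : Prop :=
  ∃ f : M.carrier →ₗ[Λ] N.carrier, Function.Surjective f ∧ ¬ Function.Injective f

/-- `N` is (isomorphic to) a submodule of `M`. -/
def IsSubmoduleOf (N M : Mdl Λ) : Prop :=
  ∃ f : N.carrier →ₗ[Λ] M.carrier, Function.Injective f

/-- `N` is (isomorphic to) a proper submodule of `M`. -/
def IsProperSubmoduleOf (N M : Mdl Λ) : Prop :=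
  ∃ f : N.carrier →ₗ[Λ] M.carrier, Function.Injective f ∧ ¬ Function.Surjective f

/-- `D` is (isomorphic to) a direct summand of `N`. -/
def IsSummand (D N : Mdl Λ) : Prop :=
  ∃ (i : D.carrier →ₗ[Λ] N.carrier) (p : N.carrier →ₗ[Λ] D.carrier),
    p.comp i = LinearMap.id

/-- `0 → A --f--> M --g--> B → 0` is a short exact sequence. -/
def IsSES {A M B : Mdl Λ} (f : A.carrier →ₗ[Λ] M.carrier)
    (g : M.carrier →ₗ[Λ] B.carrier) : Prop :=
  Function.Injective f ∧ Function.Surjective g ∧ LinearMap.range f = LinearMap.ker g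

/-- The short exact sequence `0 → A --f--> M --g--> B → 0` splits. -/
def SplitsSES {A M B : Mdl Λ} (_f : A.carrier →ₗ[Λ] M.carrier)
    (g : M.carrier →ₗ[Λ] B.carrier) : Prop :=
  ∃ s : B.carrier →ₗ[Λ] M.carrier, g.comp s = LinearMap.id

/-- `M` is an extension of `B` by `A`, i.e. there is a s.e.s. `0 → A → M → B → 0`. -/
def ExtOf (M A B : Mdl Λ) : Prop :=
  ∃ (f : A.carrier →ₗ[Λ] M.carrier) (g : M.carrier →ₗ[Λ] B.carrier), IsSES Λ f g

/-- A torsion class in `mod Λ`: a class of finite(-dimensional) modules containing `0`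
and closed under isomorphisms, factor modules and extensions. -/
structure IsTorsionClass (T : Set (Mdl Λ)) : Prop where
  fin : ∀ M ∈ T, Module.Finite Λ M.carrier
  zero_mem : ∀ M : Mdl Λ, Subsingleton M.carrier → M ∈ T
  iso_closed : ∀ M ∈ T, ∀ N : Mdl Λ, MIso Λ M N → N ∈ T
  factor_closed : ∀ M ∈ T, ∀ N : Mdl Λ, IsFactor Λ M N → N ∈ T
  ext_closed : ∀ A ∈ T, ∀ B ∈ T, ∀ M : Mdl Λ, ExtOf Λ M A B → M ∈ T

/-- A torsion-free class in `mod Λ`: a class of finite(-dimensional) modules containing `0`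
and closed under isomorphisms, submodules and extensions. -/
structure IsTorsionFreeClass (F : Set (Mdl Λ)) : Prop where
  fin : ∀ M ∈ F, Module.Finite Λ M.carrier
  zero_mem : ∀ M : Mdl Λ, Subsingleton M.carrier → M ∈ F
  iso_closed : ∀ M ∈ F, ∀ N : Mdl Λ, MIso Λ M N → N ∈ F
  sub_closed : ∀ M ∈ F, ∀ N : Mdl Λ, IsSubmoduleOf Λ N M → N ∈ F
  ext_closed : ∀ A ∈ F, ∀ B ∈ F, ∀ M : Mdl Λ, ExtOf Λ M A B → M ∈ F

/-- `Filt S M`: `M` admits a filtration `0 = M₀ ⊆ M₁ ⊆ ⋯ ⊆ M_l = M` whose successive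
quotients are isomorphic to modules in `S`. -/
inductive Filt (S : Set (Mdl Λ)) : Mdl Λ → Prop
  | of_subsingleton (M : Mdl Λ) (h : Subsingleton M.carrier) : Filt S M
  | step (M : Mdl Λ) (N : Submodule Λ M.carrier) (X : Mdl Λ) (hX : X ∈ S)
      (hN : Filt S (Mdl.of Λ N)) (e : Nonempty ((M.carrier ⧸ N) ≃ₗ[Λ] X.carrier)) :
      Filt S M

/-- The filtration closure `Filt(S)` as a set of modules. -/
def FiltSet (S : Set (Mdl Λ)) : Set (Mdl Λ) := {M | Filt Λ S M}

/-- `Gen(M)`: the class of factor modules of finite direct sums of copies of `M`. -/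
def GenSet (M : Mdl Λ) : Set (Mdl Λ) :=
  {N | ∃ (n : ℕ) (f : (Fin n → M.carrier) →ₗ[Λ] N.carrier), Function.Surjective f}

/-- `T^⊥ = {X ∈ mod Λ : Hom_Λ(N, X) = 0 for all N ∈ T}`. -/
def Perp (T : Set (Mdl Λ)) : Set (Mdl Λ) :=
  {X | Module.Finite Λ X.carrier ∧ ∀ N ∈ T, ∀ f : N.carrier →ₗ[Λ] X.carrier, f = 0}

/-- A brick: a module (in `mod Λ`) whose endomorphism ring is a division ring,
i.e. it is nonzero and every nonzero endomorphism is invertible. -/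
def IsBrick (M : Mdl Λ) : Prop :=
  Module.Finite Λ M.carrier ∧ Nontrivial M.carrier ∧
    ∀ f : M.carrier →ₗ[Λ] M.carrier, f ≠ 0 → Function.Bijective f

/-- An indecomposable module: nonzero, and not the direct sum of two nonzero submodules. -/
def Indec (M : Mdl Λ) : Prop :=
  Nontrivial M.carrier ∧
    ∀ p q : Submodule Λ M.carrier, IsCompl p q → p = ⊥ ∨ q = ⊥

/-- `M` is a minimal extending module for the torsion class `T`:
(P1) every proper factor of `M` is in `T`;
(P2) if `0 → M → X → N → 0` is non-split exact with `N ∈ T`, then `X ∈ T`;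
(P3) `Hom_Λ(T, M) = 0`. -/
structure IsMinExt (T : Set (Mdl Λ)) (M : Mdl Λ) : Prop where
  fin : Module.Finite Λ M.carrier
  p1 : ∀ N : Mdl Λ, IsProperFactor Λ M N → N ∈ T
  p2 : ∀ (X N : Mdl Λ) (f : M.carrier →ₗ[Λ] X.carrier) (g : X.carrier →ₗ[Λ] N.carrier),
      IsSES Λ f g → ¬ SplitsSES Λ f g → N ∈ T → X ∈ T
  p3 : ∀ N ∈ T, ∀ f : N.carrier →ₗ[Λ] M.carrier, f = 0

/-- `M` is a minimal co-extending module for the torsion-free class `F`: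
(P1') every proper submodule of `M` is in `F`;
(P2') if `0 → F' → X → M → 0` is non-split exact with `F' ∈ F`, then `X ∈ F`;
(P3') `Hom_Λ(M, F) = 0`. -/
structure IsMinCoExt (F : Set (Mdl Λ)) (M : Mdl Λ) : Prop where
  fin : Module.Finite Λ M.carrier
  p1 : ∀ N : Mdl Λ, IsProperSubmoduleOf Λ N M → N ∈ F
  p2 : ∀ (X F' : Mdl Λ) (f : F'.carrier →ₗ[Λ] X.carrier) (g : X.carrier →ₗ[Λ] M.carrier),
      IsSES Λ f g → ¬ SplitsSES Λ f g → F' ∈ F → X ∈ F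
  p3 : ∀ F' ∈ F, ∀ f : M.carrier →ₗ[Λ] F'.carrier, f = 0

/-- `T'` covers `T` in the lattice `tors Λ` of torsion classes ordered by containment. -/
def TorsCovers (T' T : Set (Mdl Λ)) : Prop :=
  IsTorsionClass Λ T' ∧ IsTorsionClass Λ T ∧ T ⊂ T' ∧
    ∀ Y : Set (Mdl Λ), IsTorsionClass Λ Y → T ⊂ Y → Y ⊆ T' → Y = T'

/-- `F'` covers `F` in the lattice `torf Λ` of torsion-free classes ordered by containment. -/
def TorfCovers (F' F : Set (Mdl Λ)) : Prop :=
  IsTorsionFreeClass Λ F' ∧ IsTorsionFreeClass Λ F ∧ F ⊂ F' ∧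
    ∀ Y : Set (Mdl Λ), IsTorsionFreeClass Λ Y → F ⊂ Y → Y ⊆ F' → Y = F'

/-- The join `⋁ A` of a family of torsion classes in `tors Λ`: the smallest torsion
class containing all members of `A`. -/
def TorsJoin (A : Set (Set (Mdl Λ))) : Set (Mdl Λ) :=
  ⋂₀ {T : Set (Mdl Λ) | IsTorsionClass Λ T ∧ ∀ S ∈ A, S ⊆ T}

/-- A completely join-irreducible element of `tors Λ`: a torsion class `T` such that
`T ∈ A` whenever `A` is a set of torsion classes with `⋁ A = T`. -/
def CompletelyJoinIrred (T : Set (Mdl Λ)) : Prop :=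
  IsTorsionClass Λ T ∧
    ∀ A : Set (Set (Mdl Λ)), (∀ S ∈ A, IsTorsionClass Λ S) → TorsJoin Λ A = T → T ∈ A

/-- The join representation `⋁ A` is irredundant in `tors Λ`:
every proper subset has strictly smaller join. -/
def TorsIrredundant (A : Set (Set (Mdl Λ))) : Prop :=
  ∀ B : Set (Set (Mdl Λ)), B ⊂ A → TorsJoin Λ B ⊂ TorsJoin Λ A

/-- `A` is the canonical join representation of its join in `tors Λ` (equivalently, a face
of the canonical join complex `Γ(tors Λ)`): `⋁ A` is irredundant, and `A ≪ B` for every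
irredundant join representation `⋁ B` of the same element. -/
def TorsCJR (A : Set (Set (Mdl Λ))) : Prop :=
  (∀ S ∈ A, IsTorsionClass Λ S) ∧ TorsIrredundant Λ A ∧
    ∀ B : Set (Set (Mdl Λ)), (∀ S ∈ B, IsTorsionClass Λ S) →
      TorsJoin Λ B = TorsJoin Λ A → TorsIrredundant Λ B → ∀ a ∈ A, ∃ b ∈ B, a ⊆ b

/-- `M` and `N` are hom-orthogonal: `Hom_Λ(M, N) = 0` and `Hom_Λ(N, M) = 0`. -/
def HomOrthogonal (M N : Mdl Λ) : Prop :=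
  (∀ f : M.carrier →ₗ[Λ] N.carrier, f = 0) ∧ ∀ f : N.carrier →ₗ[Λ] M.carrier, f = 0

/-!
Fix `M ∈ E`. The modules without nonzero maps to `M` form a torsion class which, by
orthogonality, contains every member of `E` except `M` itself, so `Filt (Gen M)` cannot be dropped
from the join.

Now let `T` be the join of another family `B` of torsion classes. The modules all of whose nonzero
maps to `M` are surjective also form a torsion class: on an extension, a map to `M` that is not
already surjective on the submodule vanishes there, and so factors through the quotient. This class
contains `E` because `M` is a brick, hence it contains `T`. Since `M` is in `T`, some `b ∈ B` has a
member with a nonzero map to `M`; that map is surjective, so `M ∈ b` and `Filt (Gen M) ⊆ b`.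
-/

section

variable {Λ}

theorem MIso.isFactor {M N : Mdl Λ} (h : MIso Λ M N) : IsFactor Λ M N :=
  let ⟨e⟩ := h
  ⟨e.toLinearMap, e.surjective⟩

theorem extOf_submodule {M : Mdl Λ} (N : Submodule Λ M) :
    ExtOf Λ M (Mdl.of Λ N) (Mdl.of Λ (M ⧸ N)) :=
  ⟨N.subtype, N.mkQ, N.injective_subtype, N.mkQ_surjective,
    N.range_subtype.trans N.ker_mkQ.symm⟩

theorem extOf_prod (M N : Mdl Λ) : ExtOf Λ (Mdl.of Λ (M × N)) M N :=
  ⟨LinearMap.inl Λ M N, LinearMap.snd Λ M N, LinearMap.inl_injective, LinearMap.snd_surjective,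
    LinearMap.range_inl Λ M N⟩

theorem ExtOf.finite {A B M : Mdl Λ} [Module.Finite Λ A] [Module.Finite Λ B]
    (h : ExtOf Λ M A B) : Module.Finite Λ M := by
  obtain ⟨f, g, -, hg, hfg⟩ := h
  exact Module.Finite.of_exact (LinearMap.exact_iff.2 hfg.symm) hg

theorem IsSES.exists_comp_eq {A B M N : Mdl Λ} {f : A →ₗ[Λ] M} {g : M →ₗ[Λ] B}
    (h : IsSES Λ f g) {φ : M →ₗ[Λ] N} (hφ : φ ∘ₗ f = 0) : ∃ ψ : B →ₗ[Λ] N, ψ ∘ₗ g = φ := by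
  obtain ⟨-, hg, hfg⟩ := h
  have hker : LinearMap.ker g ≤ LinearMap.ker φ :=
    hfg ▸ LinearMap.range_le_ker_iff.2 hφ
  refine ⟨(LinearMap.ker g).liftQ φ hker ∘ₗ (g.quotKerEquivOfSurjective hg).symm, ?_⟩
  ext x
  have hx : (g.quotKerEquivOfSurjective hg).symm (g x) = (LinearMap.ker g).mkQ x :=
    (LinearEquiv.symm_apply_eq _).2 rfl
  simp [hx]

theorem IsSES.extOf_comap {A B M : Mdl Λ} {f : A →ₗ[Λ] M} {g : M →ₗ[Λ] B}
    (h : IsSES Λ f g) (N : Submodule Λ B) :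
    ExtOf Λ (Mdl.of Λ (N.comap g)) A (Mdl.of Λ N) := by
  obtain ⟨hf, hg, hfg⟩ := h
  have hgf : ∀ a, g (f a) = 0 := fun a => LinearMap.mem_ker.1 (hfg ▸ ⟨a, rfl⟩)
  have hle : ∀ a, f a ∈ N.comap g := fun a => by simp [hgf]
  refine ⟨f.codRestrict (N.comap g) hle, g.restrict (p := N.comap g) fun _ hx => hx,
    (LinearMap.injective_codRestrict_iff hle).2 hf, ?_, ?_⟩
  · rintro ⟨y, hy⟩
    obtain ⟨x, rfl⟩ := hg y
    exact ⟨⟨x, hy⟩, rfl⟩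
  · exact (LinearMap.range_codRestrict _ f hle).trans <|
      (congrArg _ hfg).trans (LinearMap.ker_restrict _).symm

/-- A class of modules closed under factor modules. -/
def FactorClosed (S : Set (Mdl Λ)) : Prop :=
  ∀ M ∈ S, ∀ N : Mdl Λ, IsFactor Λ M N → N ∈ S

theorem isTorsionClass_of_factorClosed {T : Set (Mdl Λ)}
    (fin : ∀ M ∈ T, Module.Finite Λ M) (zero_mem : ∀ M : Mdl Λ, Subsingleton M → M ∈ T)
    (factor_closed : FactorClosed T)
    (ext_closed : ∀ A ∈ T, ∀ B ∈ T, ∀ M : Mdl Λ, ExtOf Λ M A B → M ∈ T) :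
    IsTorsionClass Λ T where
  fin := fin
  zero_mem := zero_mem
  iso_closed M hM N hMN := factor_closed M hM N hMN.isFactor
  factor_closed := factor_closed
  ext_closed := ext_closed

namespace Filt

variable {S : Set (Mdl Λ)} {A B M N : Mdl Λ}

theorem of_mem (hM : M ∈ S) : Filt Λ S M :=
  .step M ⊥ M hM (.of_subsingleton _ (inferInstanceAs (Subsingleton (⊥ : Submodule Λ M))))
    ⟨Submodule.quotEquivOfEqBot _ rfl⟩

theorem finite (hS : ∀ X ∈ S, Module.Finite Λ X) (hM : Filt Λ S M) : Module.Finite Λ M := by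
  induction hM with
  | of_subsingleton M h => infer_instance
  | step M N X hX _ hquot ih =>
    obtain ⟨e⟩ := hquot
    have := hS X hX
    have : Module.Finite Λ (Mdl.of Λ (M ⧸ N)) := Module.Finite.equiv e.symm
    exact (extOf_submodule N).finite

theorem of_mIso (hM : Filt Λ S M) (h : MIso Λ M N) : Filt Λ S N := by
  induction hM generalizing N with
  | of_subsingleton M hM =>
    obtain ⟨e⟩ := h
    exact .of_subsingleton N e.symm.injective.subsingleton
  | step M M' X hX _ hquot ih =>
    obtain ⟨e⟩ := h
    obtain ⟨q⟩ := hquot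
    let N' : Submodule Λ N := M'.map e.toLinearMap
    have hN' : Filt Λ S (Mdl.of Λ N') := ih ⟨e.submoduleMap M'⟩
    exact .step N N' X hX hN' ⟨(Submodule.Quotient.equiv M' N' e rfl).symm.trans q⟩

theorem of_isFactor (hS : FactorClosed S) (hM : Filt Λ S M) (h : IsFactor Λ M N) :
    Filt Λ S N := by
  induction hM generalizing N with
  | of_subsingleton M hM =>
    obtain ⟨q, hq⟩ := h
    exact .of_subsingleton N hq.subsingleton
  | step M M' X hX _ hquot ih =>
    obtain ⟨q, hq⟩ := h
    obtain ⟨e⟩ := hquot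
    let qbar : (M ⧸ M') →ₗ[Λ] N ⧸ M'.map q := M'.mapQ (M'.map q) q (M'.le_comap_map q)
    have hqbar : Function.Surjective qbar := by
      rw [← LinearMap.range_eq_top, Submodule.range_mapQ, LinearMap.range_eq_top.2 hq,
        Submodule.map_top, Submodule.range_mkQ]
    have hmem : Mdl.of Λ (N ⧸ M'.map q) ∈ S :=
      hS X hX _ ⟨qbar ∘ₗ e.symm.toLinearMap, hqbar.comp e.symm.surjective⟩
    exact .step N (M'.map q) _ hmem (ih ⟨q.submoduleMap M', q.submoduleMap_surjective M'⟩)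
      ⟨LinearEquiv.refl Λ _⟩

theorem of_extOf (hA : Filt Λ S A) (hB : Filt Λ S B) (h : ExtOf Λ M A B) : Filt Λ S M := by
  induction hB generalizing M with
  | of_subsingleton B hB =>
    obtain ⟨f, g, hf, -, hfg⟩ := h
    have hf' : Function.Surjective f := by
      rw [← LinearMap.range_eq_top, hfg, LinearMap.ker_eq_top]
      exact Subsingleton.elim g 0
    exact hA.of_mIso ⟨.ofBijective f ⟨hf, hf'⟩⟩
  | step B N X hX _ hquot ih =>
    obtain ⟨f, g, hses⟩ := h
    obtain ⟨e⟩ := hquot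
    have hker : N.comap g = LinearMap.ker (N.mkQ ∘ₗ g) := by
      rw [LinearMap.ker_comp, Submodule.ker_mkQ]
    have hsurj : Function.Surjective (N.mkQ ∘ₗ g) := N.mkQ_surjective.comp hses.2.1
    exact .step M (N.comap g) X hX (ih (hses.extOf_comap N))
      ⟨(Submodule.quotEquivOfEq _ _ hker).trans
        (((N.mkQ ∘ₗ g).quotKerEquivOfSurjective hsurj).trans e)⟩

end Filt

theorem isTorsionClass_filtSet {S : Set (Mdl Λ)} (hfin : ∀ X ∈ S, Module.Finite Λ X)
    (hS : FactorClosed S) : IsTorsionClass Λ (FiltSet Λ S) :=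
  isTorsionClass_of_factorClosed (fun _ hM => hM.finite hfin) Filt.of_subsingleton
    (fun _ hM _ => hM.of_isFactor hS) (fun _ hA _ hB _ => hA.of_extOf hB)

theorem IsTorsionClass.filtSet_subset {S T : Set (Mdl Λ)} (hT : IsTorsionClass Λ T)
    (hST : S ⊆ T) : FiltSet Λ S ⊆ T := by
  intro M hM
  induction hM with
  | of_subsingleton M h => exact hT.zero_mem M h
  | step M N X hX _ hquot ih =>
    obtain ⟨e⟩ := hquot
    have hquot_mem : Mdl.of Λ (M ⧸ N) ∈ T := hT.iso_closed X (hST hX) _ ⟨e.symm⟩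
    exact hT.ext_closed _ ih _ hquot_mem M (extOf_submodule N)

theorem IsTorsionClass.pi_mem {T : Set (Mdl Λ)} (hT : IsTorsionClass Λ T) {M : Mdl Λ}
    (hM : M ∈ T) (n : ℕ) : Mdl.of Λ (Fin n → M) ∈ T := by
  induction n with
  | zero => exact hT.zero_mem _ (inferInstanceAs (Subsingleton (Fin 0 → M)))
  | succ n ih =>
    have hprod : Mdl.of Λ (M × (Fin n → M)) ∈ T :=
      hT.ext_closed M hM _ ih _ (extOf_prod M (.of Λ (Fin n → M)))
    exact hT.iso_closed _ hprod _ ⟨Fin.consLinearEquiv Λ fun _ => M⟩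

theorem IsTorsionClass.genSet_subset {T : Set (Mdl Λ)} (hT : IsTorsionClass Λ T) {M : Mdl Λ}
    (hM : M ∈ T) : GenSet Λ M ⊆ T :=
  fun N ⟨n, f, hf⟩ => hT.factor_closed _ (hT.pi_mem hM n) N ⟨f, hf⟩

theorem mem_genSet_self (M : Mdl Λ) : M ∈ GenSet Λ M :=
  ⟨1, LinearMap.proj 0, LinearMap.proj_surjective 0⟩

theorem factorClosed_genSet (M : Mdl Λ) : FactorClosed (GenSet Λ M) :=
  fun _ ⟨n, f, hf⟩ _ ⟨g, hg⟩ => ⟨n, g ∘ₗ f, hg.comp hf⟩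

theorem finite_of_mem_genSet {M X : Mdl Λ} [Module.Finite Λ M] (hX : X ∈ GenSet Λ M) :
    Module.Finite Λ X :=
  let ⟨_, f, hf⟩ := hX
  Module.Finite.of_surjective f hf

/-- The torsion class `T(M) = Filt(Gen(M))` generated by `M`. -/
def filtGen (M : Mdl Λ) : Set (Mdl Λ) := FiltSet Λ (GenSet Λ M)

theorem mem_filtGen_self (M : Mdl Λ) : M ∈ filtGen M :=
  Filt.of_mem (mem_genSet_self M)

theorem isTorsionClass_filtGen (M : Mdl Λ) [Module.Finite Λ M] : IsTorsionClass Λ (filtGen M) :=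
  isTorsionClass_filtSet (fun _ => finite_of_mem_genSet) (factorClosed_genSet M)

theorem IsTorsionClass.filtGen_subset_iff {T : Set (Mdl Λ)} (hT : IsTorsionClass Λ T)
    {M : Mdl Λ} : filtGen M ⊆ T ↔ M ∈ T :=
  ⟨fun h => h (mem_filtGen_self M), fun hM => hT.filtSet_subset (hT.genSet_subset hM)⟩

theorem subset_torsJoin {A : Set (Set (Mdl Λ))} {S : Set (Mdl Λ)} (hS : S ∈ A) :
    S ⊆ TorsJoin Λ A :=
  Set.subset_sInter fun _ hT => hT.2 S hS

theorem IsTorsionClass.torsJoin_subset {A : Set (Set (Mdl Λ))} {T : Set (Mdl Λ)}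
    (hT : IsTorsionClass Λ T) (hA : ∀ S ∈ A, S ⊆ T) : TorsJoin Λ A ⊆ T :=
  Set.sInter_subset_of_mem ⟨hT, hA⟩

theorem torsJoin_mono {A B : Set (Set (Mdl Λ))} (h : B ⊆ A) : TorsJoin Λ B ⊆ TorsJoin Λ A :=
  Set.sInter_subset_sInter fun _ hT => ⟨hT.1, fun S hS => hT.2 S (h hS)⟩

theorem torsIrredundant_of_forall_exists {A : Set (Set (Mdl Λ))}
    (h : ∀ S ∈ A, ∃ T, IsTorsionClass Λ T ∧ (∀ S' ∈ A, S' ≠ S → S' ⊆ T) ∧ ¬ S ⊆ T) :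
    TorsIrredundant Λ A := by
  intro B hB
  obtain ⟨S, hSA, hSB⟩ := Set.exists_of_ssubset hB
  obtain ⟨T, hT, hothers, hST⟩ := h S hSA
  have hBT : TorsJoin Λ B ⊆ T :=
    hT.torsJoin_subset fun S' hS' => hothers S' (hB.1 hS') (ne_of_mem_of_not_mem hS' hSB)
  exact ⟨torsJoin_mono hB.1, fun hAB => hST ((subset_torsJoin hSA).trans (hAB.trans hBT))⟩

/-- The torsion class `^⊥N` of all modules without nonzero maps to `N`, the mirror image
of `Perp`. -/
def leftPerp (N : Mdl Λ) : Set (Mdl Λ) :=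
  {X | Module.Finite Λ X ∧ ∀ f : X →ₗ[Λ] N, f = 0}

theorem isTorsionClass_leftPerp (N : Mdl Λ) : IsTorsionClass Λ (leftPerp N) := by
  refine isTorsionClass_of_factorClosed (fun _ hM => hM.1) ?_ ?_ ?_
  · exact fun M hM => ⟨inferInstance, fun f => Subsingleton.elim f 0⟩
  · rintro M ⟨hfin, hM⟩ Q ⟨q, hq⟩
    exact ⟨.of_surjective q hq, fun f => (LinearMap.cancel_right hq).1 (hM (f ∘ₗ q))⟩
  · rintro A ⟨hA_fin, hA⟩ B ⟨hB_fin, hB⟩ M hM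
    refine ⟨hM.finite, fun φ => ?_⟩
    obtain ⟨f, g, hses⟩ := hM
    obtain ⟨ψ, rfl⟩ := hses.exists_comp_eq (hA (φ ∘ₗ f))
    rw [hB ψ, LinearMap.zero_comp]

theorem notMem_leftPerp_self (M : Mdl Λ) [Nontrivial M] : M ∉ leftPerp M :=
  fun h => one_ne_zero (α := Module.End Λ M) (h.2 1)

/-- The class of modules all of whose nonzero maps to `N` are surjective: a torsion class that
bounds from above the join generated by a family of hom-orthogonal bricks containing `N`. -/
def zeroOrSurjective (N : Mdl Λ) : Set (Mdl Λ) :=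
  {X | Module.Finite Λ X ∧ ∀ f : X →ₗ[Λ] N, f = 0 ∨ Function.Surjective f}

theorem isTorsionClass_zeroOrSurjective (N : Mdl Λ) : IsTorsionClass Λ (zeroOrSurjective N) := by
  refine isTorsionClass_of_factorClosed (fun _ hM => hM.1) ?_ ?_ ?_
  · exact fun M hM => ⟨inferInstance, fun f => .inl (Subsingleton.elim f 0)⟩
  · rintro M ⟨hfin, hM⟩ Q ⟨q, hq⟩
    refine ⟨.of_surjective q hq, fun f => ?_⟩
    exact (hM (f ∘ₗ q)).imp (LinearMap.cancel_right hq).1 .of_comp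
  · rintro A ⟨hA_fin, hA⟩ B ⟨hB_fin, hB⟩ M hM
    refine ⟨hM.finite, fun φ => ?_⟩
    obtain ⟨f, g, hses⟩ := hM
    obtain hzero | hsurj := hA (φ ∘ₗ f)
    · obtain ⟨ψ, rfl⟩ := hses.exists_comp_eq hzero
      exact (hB ψ).imp (fun hψ => by rw [hψ, LinearMap.zero_comp]) (·.comp hses.2.1)
    · exact .inr (.of_comp hsurj)

theorem exists_mem_of_mem_torsJoin {B : Set (Set (Mdl Λ))} (hB : ∀ S ∈ B, IsTorsionClass Λ S)
    {M : Mdl Λ} [Nontrivial M] (hM : M ∈ TorsJoin Λ B)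
    (hsurj : ∀ S ∈ B, S ⊆ zeroOrSurjective M) : ∃ S ∈ B, M ∈ S := by
  by_contra! hnot
  have hperp : TorsJoin Λ B ⊆ leftPerp M := by
    refine (isTorsionClass_leftPerp M).torsJoin_subset fun S hS X hX =>
      ⟨(hB S hS).fin X hX, fun f => (hsurj S hS hX).2 f |>.resolve_right fun hf => ?_⟩
    exact hnot S hS ((hB S hS).factor_closed X hX M ⟨f, hf⟩)
  exact notMem_leftPerp_self M (hperp hM)

theorem torsIrredundant_image_filtGen {E : Set (Mdl Λ)} (hfin : ∀ M ∈ E, Module.Finite Λ M)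
    (hnontrivial : ∀ M ∈ E, Nontrivial M)
    (horth : ∀ M ∈ E, ∀ M' ∈ E, M ≠ M' → ∀ f : M →ₗ[Λ] M', f = 0) :
    TorsIrredundant Λ (filtGen '' E) := by
  refine torsIrredundant_of_forall_exists (Set.forall_mem_image.2 fun M hM => ?_)
  have := hnontrivial M hM
  have hperp := isTorsionClass_leftPerp M
  refine ⟨leftPerp M, hperp, Set.forall_mem_image.2 fun M' hM' hne => ?_,
    fun h => notMem_leftPerp_self M (hperp.filtGen_subset_iff.1 h)⟩
  exact hperp.filtGen_subset_iff.2 ⟨hfin M' hM', horth M' hM' M hM (ne_of_apply_ne filtGen hne)⟩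

theorem exists_filtGen_subset_of_torsJoin_eq {E : Set (Mdl Λ)} {M : Mdl Λ} [Nontrivial M]
    (hM : M ∈ E) (hE : E ⊆ zeroOrSurjective M) {B : Set (Set (Mdl Λ))}
    (hB : ∀ S ∈ B, IsTorsionClass Λ S) (hjoin : TorsJoin Λ B = TorsJoin Λ (filtGen '' E)) :
    ∃ S ∈ B, filtGen M ⊆ S := by
  have hzs := isTorsionClass_zeroOrSurjective M
  have hjoin_subset : TorsJoin Λ (filtGen '' E) ⊆ zeroOrSurjective M :=
    hzs.torsJoin_subset (Set.forall_mem_image.2 fun M' hM' => hzs.filtGen_subset_iff.2 (hE hM'))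
  have hMB : M ∈ TorsJoin Λ B :=
    hjoin ▸ subset_torsJoin (Set.mem_image_of_mem filtGen hM) (mem_filtGen_self M)
  obtain ⟨S, hS, hMS⟩ := exists_mem_of_mem_torsJoin hB hMB fun S hS =>
    (subset_torsJoin hS).trans (hjoin.trans_subset hjoin_subset)
  exact ⟨S, hS, (hB S hS).filtGen_subset_iff.2 hMS⟩

theorem subset_zeroOrSurjective_of_isBrick {E : Set (Mdl Λ)} (hE : ∀ M ∈ E, IsBrick Λ M)
    (horth : ∀ M ∈ E, ∀ M' ∈ E, M ≠ M' → HomOrthogonal Λ M M') {M : Mdl Λ} (hM : M ∈ E) :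
    E ⊆ zeroOrSurjective M := by
  refine fun M' hM' => ⟨(hE M' hM').1, fun f => ?_⟩
  obtain rfl | hne := eq_or_ne M' M
  · exact or_iff_not_imp_left.2 fun hf => ((hE M' hM').2.2 f hf).surjective
  · exact .inl ((horth M' hM' M hM hne).1 f)

end

theorem statement19_general (Λ : Type) [Ring Λ] (E : Set (Mdl Λ)) (hE : ∀ M ∈ E, IsBrick Λ M)
    (horth : ∀ M ∈ E, ∀ M' ∈ E, M ≠ M' → HomOrthogonal Λ M M') :
    TorsCJR Λ ((fun M : Mdl Λ => FiltSet Λ (GenSet Λ M)) '' E) := by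
  refine ⟨Set.forall_mem_image.2 fun M hM => ?_, ?_, ?_⟩
  · have := (hE M hM).1
    exact isTorsionClass_filtGen M
  · exact torsIrredundant_image_filtGen (fun M hM => (hE M hM).1) (fun M hM => (hE M hM).2.1)
      fun M hM M' hM' hne => (horth M hM M' hM' hne).1
  · refine fun B hB hjoin _ => Set.forall_mem_image.2 fun M hM => ?_
    have := (hE M hM).2.1
    have hEM : E ⊆ zeroOrSurjective M := subset_zeroOrSurjective_of_isBrick hE horth hM
    exact exists_filtGen_subset_of_torsJoin_eq hM hEM hB hjoin

/-- Let `E` be a collection of pairwise hom-orthogonal bricks over `Λ`.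
Then `⋁ {Filt(Gen(M)) : M ∈ E}` is the canonical join representation of its join
`T = ⋁ {Filt(Gen(M)) : M ∈ E}` in `tors Λ`. -/
theorem statement19 (k : Type) [Field k] (Λ : Type) [Ring Λ] [Algebra k Λ]
    [FiniteDimensional k Λ] (E : Set (Mdl Λ)) (hE : ∀ M ∈ E, IsBrick Λ M)
    (horth : ∀ M ∈ E, ∀ M' ∈ E, M ≠ M' → HomOrthogonal Λ M M') :
    TorsCJR Λ ((fun M : Mdl Λ => FiltSet Λ (GenSet Λ M)) '' E) :=
  statement19_general Λ E hE horth
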